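/- Let f be a cellular automaton on A^ℤ such that ω̃(f) has exactly k σ±-chain components X_1, …, X_k (k finite). Then there is a cyclic permutation ρ of {1, …, k} such that f(X_i) = X_{ρ(i)} for each i = 1, …, k. -/

import Mathlib

open Filter Set Function

namespace Gls

variable {A : Type*}

/-- The left shift map on `A^ℤ`. -/
def shift (x : ℤ → A) : ℤ → A := fun i => x (i + 1)

/-- A cellular automaton: a continuous shift-commuting self-map of the full shift. -/
def IsCA [TopologicalSpace A] (f : (ℤ → A) → (ℤ → A)) : Prop :=
  Continuous f ∧ f ∘ shift = shift ∘ f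

/-- The set of limit points of the forward orbit of `x` under `f`. -/
def omegaSet [TopologicalSpace A] (f : (ℤ → A) → (ℤ → A)) (x : ℤ → A) : Set (ℤ → A) :=
  {y | MapClusterPt y atTop fun t => f^[t] x}

/-- The realm of attraction of `Y`. -/
def realm [TopologicalSpace A] (f : (ℤ → A) → (ℤ → A)) (Y : Set (ℤ → A)) : Set (ℤ → A) :=
  {x | omegaSet f x ⊆ Y}

/-- The generic limit set: the intersection of all closed sets whose realm is comeager. -/
def genLimitSet [TopologicalSpace A] (f : (ℤ → A) → (ℤ → A)) : Set (ℤ → A) :=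
  ⋂₀ {C | IsClosed C ∧ realm f C ∈ residual (ℤ → A)}

/-- The word `x_{[i, i+n)}` of length `n` read in the configuration `x` from position `i`. -/
def word (x : ℤ → A) (i : ℤ) (n : ℕ) : List A :=
  (List.range n).map fun k => x (i + k)

/-- The cylinder set `[w]_i`. -/
def cylinder (w : List A) (i : ℤ) : Set (ℤ → A) := {x | word x i w.length = w}

/-- The language of `X`: all finite words occurring in points of `X`. -/
def lang (X : Set (ℤ → A)) : Set (List A) :=
  {w | ∃ x ∈ X, ∃ i : ℤ, word x i w.length = w}


/-- A subshift: a closed shift-invariant set. -/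
def IsSubshift {A : Type*} [TopologicalSpace A] (X : Set (ℤ → A)) : Prop :=
  IsClosed X ∧ shift '' X = X

/-- The chain relation: `u ∼ v` iff they have the same length `n` and there are `x ∈ X`
and `k ≥ 0` with `x_{[0,n)} = u` and `x_{[k,k+n)} = v`. -/
def chainRel {A : Type*} (X : Set (ℤ → A)) (u v : List A) : Prop :=
  u.length = v.length ∧ ∃ x ∈ X, ∃ k : ℕ,
    word x 0 u.length = u ∧ word x (k : ℤ) u.length = v

/-- `X` is `σ±`-chain transitive if for every `n`, the symmetric-transitive closure of the
width-`n` chain relation relates every pair of words in `L_n(X)`. -/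
def ChainTransPM {A : Type*} (X : Set (ℤ → A)) : Prop :=
  ∀ u ∈ lang X, ∀ v ∈ lang X, u.length = v.length → Relation.EqvGen (chainRel X) u v

/-- `Y` is a `σ±`-chain component of `X`: a maximal `σ±`-chain transitive subshift
contained in `X`. -/
def IsChainComponent {A : Type*} [TopologicalSpace A] (X Y : Set (ℤ → A)) : Prop :=
  IsSubshift Y ∧ Y ⊆ X ∧ ChainTransPM Y ∧
    ∀ Z : Set (ℤ → A), IsSubshift Z → Z ⊆ X → ChainTransPM Z → Y ⊆ Z → Z = Y

section Helpers

set_option linter.unusedSectionVars false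

/-- Shift by an integer, as an equivalence. -/
def shE (n : ℤ) : (ℤ → A) ≃ (ℤ → A) where
  toFun x := fun j => x (j + n)
  invFun x := fun j => x (j - n)
  left_inv x := by funext j; simp
  right_inv x := by funext j; simp

theorem shE_apply (n : ℤ) (x : ℤ → A) (j : ℤ) : shE n x j = x (j + n) := rfl

theorem shE_zero (x : ℤ → A) : shE 0 x = x := by
  funext j; simp [shE_apply]

theorem shE_one (x : ℤ → A) : shE 1 x = shift x := rfl

theorem shE_add (m n : ℤ) (x : ℤ → A) : shE (m + n) x = shE m (shE n x) := by
  funext j; simp [shE_apply, add_assoc]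

def Inv (X : Set (ℤ → A)) : Prop := ∀ x, shift x ∈ X ↔ x ∈ X

theorem Inv.shE {X : Set (ℤ → A)} (h : Inv X) (n : ℤ) (x : ℤ → A) : shE n x ∈ X ↔ x ∈ X := by
  induction n using Int.induction_on with
  | zero => rw [shE_zero]
  | succ i ih => rw [add_comm, shE_add, shE_one, h, ih]
  | pred i ih =>
    rw [← h (Gls.shE (-(i:ℤ) - 1) x), ← shE_one, ← shE_add, ← ih]
    simp

theorem shift_inj : Function.Injective (shift : (ℤ → A) → (ℤ → A)) := by
  intro x y h
  exact (shE 1).injective h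

theorem inv_iff {X : Set (ℤ → A)} : shift '' X = X ↔ Inv X := by
  constructor
  · intro h x
    conv_lhs => rw [← h]
    exact shift_inj.mem_set_image
  · intro h
    ext x
    constructor
    · rintro ⟨y, hy, rfl⟩; exact (h y).2 hy
    · intro hx
      refine ⟨shE (-1) x, (h.shE _ _).2 hx, ?_⟩
      rw [← shE_one, ← shE_add]; simp [shE_zero]

theorem word_def (x : ℤ → A) (i : ℤ) (n : ℕ) :
    word x i n = (List.range n).map fun k : ℕ => x (i + (k : ℤ)) := by
  have : ∀ l : List ℕ, (List.flatMap (fun a : ℕ => [(a : ℤ)]) l).map (fun k => x (i + k)) =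
      l.map fun k : ℕ => x (i + (k : ℤ)) := by
    intro l
    induction l with
    | nil => rfl
    | cons a l ih => simpa using ih
  exact this _

theorem word_eq_iff (x y : ℤ → A) (i j : ℤ) (n : ℕ) :
    word x i n = word y j n ↔ ∀ k < n, x (i + k) = y (j + k) := by
  simp [word_def, List.map_inj_left]

theorem word_length (x : ℤ → A) (i : ℤ) (n : ℕ) : (word x i n).length = n := by
  simp [word_def]

theorem word_shE (x : ℤ → A) (i m : ℤ) (n : ℕ) : word (shE m x) i n = word x (i + m) n := by
  rw [word_eq_iff]; intro k _; rw [shE_apply]; congr 1; ring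

variable [TopologicalSpace A]

def shH (n : ℤ) : (ℤ → A) ≃ₜ (ℤ → A) where
  toEquiv := shE n
  continuous_toFun := by
    show Continuous fun (x : ℤ → A) => fun j => x (j + n)
    fun_prop
  continuous_invFun := by
    show Continuous fun (x : ℤ → A) => fun j => x (j - n)
    fun_prop

theorem shH_apply (n : ℤ) (x : ℤ → A) : shH n x = shE n x := rfl

/-- The topology of open shift-invariant sets. -/
@[reducible] def orbT (A : Type*) [TopologicalSpace A] : TopologicalSpace (ℤ → A) where
  IsOpen U := IsOpen U ∧ Inv U
  isOpen_univ := ⟨isOpen_univ, fun _ => by simp⟩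
  isOpen_inter := by
    rintro s t ⟨hs, hs'⟩ ⟨ht, ht'⟩
    exact ⟨hs.inter ht, fun x => and_congr (hs' x) (ht' x)⟩
  isOpen_sUnion := by
    intro S hS
    refine ⟨isOpen_sUnion fun t ht => (hS t ht).1, fun x => ?_⟩
    constructor
    · rintro ⟨t, ht, h⟩; exact ⟨t, ht, ((hS t ht).2 x).1 h⟩
    · rintro ⟨t, ht, h⟩; exact ⟨t, ht, ((hS t ht).2 x).2 h⟩

theorem orb_isClosed {X : Set (ℤ → A)} : @IsClosed _ (orbT A) X ↔ IsClosed X ∧ Inv X := by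
  rw [← @isOpen_compl_iff _ X (orbT A), ← isOpen_compl_iff]
  refine and_congr Iff.rfl ?_
  exact forall_congr' fun x => not_iff_not

theorem isSubshift_iff {X : Set (ℤ → A)} : IsSubshift X ↔ @IsClosed _ (orbT A) X := by
  rw [orb_isClosed, IsSubshift, inv_iff]

/-- orb preconnected -/
def Pre (X : Set (ℤ → A)) : Prop := @IsPreconnected _ (orbT A) X

theorem window [Finite A] [DiscreteTopology A] {K U : Set (ℤ → A)} (hK : IsCompact K)
    (hU : IsOpen U) (hKU : K ⊆ U) :
    ∃ n : ℕ, ∀ x ∈ K, ∀ y : ℤ → A, (∀ i : ℤ, -n ≤ i → i < n → x i = y i) → y ∈ U := by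
  refine hK.induction_on (p := fun K => ∃ n : ℕ, ∀ x ∈ K, ∀ y : ℤ → A,
    (∀ i : ℤ, -n ≤ i → i < n → x i = y i) → y ∈ U) ⟨0, by simp⟩ ?_ ?_ ?_
  · rintro s t hst ⟨n, hn⟩
    exact ⟨n, fun x hx => hn x (hst hx)⟩
  · rintro s t ⟨n, hn⟩ ⟨m, hm⟩
    refine ⟨max n m, ?_⟩
    rintro x (hx | hx) y hy
    · exact hn x hx y fun i h1 h2 => hy i (by push_cast; omega) (by push_cast; omega)
    · exact hm x hx y fun i h1 h2 => hy i (by push_cast; omega) (by push_cast; omega)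
  · intro x hx
    obtain ⟨I, u, hu, hIu⟩ := isOpen_pi_iff.1 hU x (hKU hx)
    refine ⟨{z | ∀ i ∈ I, z i = x i}, mem_nhdsWithin_of_mem_nhds ?_, ?_⟩
    · refine IsOpen.mem_nhds ?_ (fun i _ => rfl)
      have : {z : ℤ → A | ∀ i ∈ I, z i = x i} = (I : Set ℤ).pi fun i => {x i} := by
        ext z; simp [Set.pi]
      rw [this]
      exact isOpen_set_pi I.finite_toSet fun i _ => isOpen_discrete _
    · refine ⟨I.sup Int.natAbs + 1, fun z hz y hy => hIu ?_⟩
      intro i hi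
      have h1 : i.natAbs ≤ I.sup Int.natAbs := Finset.le_sup (f := Int.natAbs) hi
      rw [← hy i (by push_cast; omega) (by push_cast; omega), hz i hi]
      exact (hu i hi).2

theorem isOpen_word [DiscreteTopology A] (n : ℕ) (R : List A → Prop) :
    IsOpen {z : ℤ → A | R (word z 0 n)} := by
  have hc : Continuous fun (z : ℤ → A) => fun k : Fin n => z (0 + (k : ℕ)) := by fun_prop
  have := (isOpen_discrete {g : Fin n → A | R (List.ofFn g)}).preimage hc
  convert this using 1
  ext z
  have : word z 0 n = List.ofFn fun k : Fin n => z (0 + (k : ℕ)) := by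
    apply List.ext_getElem <;> simp [word_def]
  simp [this]

theorem chain_of_pre [DiscreteTopology A] {X : Set (ℤ → A)} (hX : IsClosed X) (hI : Inv X)
    (h : Pre X) : ChainTransPM X := by
  rintro u ⟨x, hx, i, hu⟩ v ⟨y, hy, j, hv⟩ hl
  by_contra hne
  set n := u.length with hn
  have aux : ∀ R : List A → Prop, (∀ z ∈ X, (R (word (shift z) 0 n) ↔ R (word z 0 n))) →
      @IsOpen _ (orbT A) ({z : ℤ → A | R (word z 0 n)} ∪ Xᶜ) := by
    intro R hR
    refine ⟨(isOpen_word n R).union hX.isOpen_compl, fun z => ?_⟩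
    by_cases hz : z ∈ X
    · have hz' := (hI z).2 hz
      simp [hz, hz', hR z hz]
    · have hz' := mt (hI z).1 hz
      simp [hz, hz']
  have key : ∀ z ∈ X, chainRel X (word z 0 n) (word (shift z) 0 n) := by
    intro z hz
    refine ⟨by simp [word_length], z, hz, 1, by simp [word_length], ?_⟩
    rw [word_length, ← shE_one, word_shE]; simp
  have hR : ∀ z ∈ X, (Relation.EqvGen (chainRel X) u (word (shift z) 0 n) ↔
      Relation.EqvGen (chainRel X) u (word z 0 n)) := fun z hz =>
    ⟨fun h => h.trans _ _ _ (.symm _ _ (.rel _ _ (key z hz))),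
     fun h => h.trans _ _ _ (.rel _ _ (key z hz))⟩
  obtain ⟨z, hz, h1, h2⟩ := h _ _ (aux _ hR)
    (aux (fun w => ¬ Relation.EqvGen (chainRel X) u w) fun z hz => not_congr (hR z hz))
    (by
      intro z hz
      by_cases hc : Relation.EqvGen (chainRel X) u (word z 0 n)
      · exact Or.inl (Or.inl hc)
      · exact Or.inr (Or.inl hc))
    ⟨shE i x, (hI.shE _ _).2 hx, Or.inl (by
      show Relation.EqvGen (chainRel X) u (word _ 0 n)
      rw [word_shE, zero_add, hu]; exact .refl _)⟩
    ⟨shE j y, (hI.shE _ _).2 hy, Or.inl (by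
      show ¬ Relation.EqvGen (chainRel X) u (word _ 0 n)
      rw [word_shE, zero_add, hl, hv]; exact hne)⟩
  rcases h1 with h1 | h1
  · rcases h2 with h2 | h2
    · exact h2 h1
    · exact h2 hz
  · exact h1 hz

theorem pre_of_chain [Finite A] [DiscreteTopology A] {X : Set (ℤ → A)} (hX : IsClosed X)
    (hI : Inv X) (h : ChainTransPM X) : Pre X := by
  rintro U V ⟨hU, hUI⟩ ⟨hV, hVI⟩ hcov ⟨x, hx, hxU⟩ ⟨y, hy, hyV⟩
  by_contra hne
  have hK : IsCompact (X ∩ Vᶜ) := (hX.inter hV.isClosed_compl).isCompact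
  have hXU : ∀ z ∈ X, (z ∈ U ↔ z ∉ V) := by
    intro z hz
    constructor
    · intro h1 h2; exact hne ⟨z, hz, h1, h2⟩
    · intro h1; exact (hcov hz).resolve_right h1
  obtain ⟨n, hn⟩ := window hK hU (fun z hz => (hXU z hz.1).2 hz.2)
  have hn' : ∀ z ∈ X, z ∈ U → ∀ w : ℤ → A, word z 0 (2 * n) = word w 0 (2 * n) → w ∈ U := by
    intro z hz hzU w hzw
    rw [word_eq_iff] at hzw
    rw [← Inv.shE (X := U) hUI n]
    refine hn (shE n z) ⟨(hI.shE _ _).2 hz, ?_⟩ _ ?_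
    · exact (hXU _ ((hI.shE _ _).2 hz)).1 ((Inv.shE (X := U) hUI _ _).2 hzU)
    · intro i h1 h2
      have := hzw (i + n).toNat (by omega)
      rw [shE_apply, shE_apply]
      have e : (0 : ℤ) + ((i + n).toNat : ℤ) = i + n := by omega
      rwa [e] at this
  let W : List A → Prop := fun w => ∃ z ∈ X, z ∈ U ∧ word z 0 (2 * n) = w
  have hW : ∀ u v, chainRel X u v → (W u ↔ W v) := by
    rintro u v ⟨hl, a, ha, k, h1, h2⟩
    constructor
    · rintro ⟨z, hz, hzU, rfl⟩
      rw [word_length] at h1 h2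
      have := hn' z hz hzU a h1.symm
      refine ⟨shE k a, (hI.shE _ _).2 ha, (Inv.shE (X := U) hUI _ _).2 this, ?_⟩
      rw [word_shE, zero_add, h2]
    · rintro ⟨z, hz, hzU, rfl⟩
      rw [word_length] at hl
      rw [hl] at h1 h2
      have := hn' z hz hzU (shE k a) (by rw [word_shE, zero_add, h2])
      exact ⟨a, ha, (Inv.shE (X := U) hUI _ _).1 this, h1⟩
  have hW' : ∀ u v, Relation.EqvGen (chainRel X) u v → (W u ↔ W v) := by
    intro u v huv
    induction huv with
    | rel u v h => exact hW u v h
    | refl u => exact Iff.rfl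
    | symm u v _ ih => exact ih.symm
    | trans u v w _ _ ih1 ih2 => exact ih1.trans ih2
  have hc := h (word x 0 (2 * n)) ⟨x, hx, 0, by rw [word_length]⟩
    (word y 0 (2 * n)) ⟨y, hy, 0, by rw [word_length]⟩ (by simp [word_length])
  obtain ⟨z, hz, hzU, hzy⟩ := (hW' _ _ hc).1 ⟨x, hx, hxU, rfl⟩
  exact hne ⟨y, hy, hn' z hz hzU y hzy, hyV⟩

/-! Dynamics -/

variable {f : (ℤ → A) → (ℤ → A)}

theorem ca_shE (hf : IsCA f) (n : ℤ) (x : ℤ → A) : f (shE n x) = shE n (f x) := by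
  have h1 : ∀ x, f (shift x) = shift (f x) := fun x => congrFun hf.2 x
  induction n using Int.induction_on with
  | zero => simp [shE_zero]
  | succ i ih => rw [add_comm, shE_add, shE_one, h1, ih, ← shE_one, ← shE_add]
  | pred i ih =>
    apply shift_inj
    rw [← h1, ← shE_one, ← shE_add, ← shE_one, ← shE_add]
    simpa using ih

theorem iter_shE (hf : IsCA f) (n : ℤ) (x : ℤ → A) (t : ℕ) :
    f^[t] (shE n x) = shE n (f^[t] x) := by
  induction t with
  | zero => rfl
  | succ t ih => rw [iterate_succ_apply', ih, ca_shE hf, iterate_succ_apply']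

theorem omega_shE (hf : IsCA f) (n : ℤ) {x y : ℤ → A} (h : y ∈ omegaSet f x) :
    shE n y ∈ omegaSet f (shE n x) := by
  have := MapClusterPt.continuousAt_comp (shH (A := A) n).continuous.continuousAt h
  have e : (fun t => f^[t] (shE n x)) = (shH n) ∘ fun t => f^[t] x := by
    funext t; exact iter_shE hf n x t
  show MapClusterPt _ _ _
  rw [e]; exact this

theorem omega_f (hf : IsCA f) {x y : ℤ → A} (h : y ∈ omegaSet f x) :
    f y ∈ omegaSet f x := by
  have := MapClusterPt.continuousAt_comp hf.1.continuousAt h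
  have e : (f ∘ fun t => f^[t] x) = (fun t => f^[t] x) ∘ fun t => t + 1 := by
    funext t; exact (iterate_succ_apply' f t x).symm
  rw [e] at this
  exact MapClusterPt.of_comp (tendsto_add_atTop_nat 1) this

variable [Finite A] [DiscreteTopology A]

theorem ev_of_omega {x : ℤ → A} {W : Set (ℤ → A)} (hW : IsOpen W) (h : omegaSet f x ⊆ W) :
    ∀ᶠ t in atTop, f^[t] x ∈ W := by
  by_contra hc
  rw [not_eventually] at hc
  obtain ⟨a, ha, hc⟩ := hW.isClosed_compl.isCompact.exists_mapClusterPt_of_frequently hc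
  exact ha (h hc)

theorem omega_nonempty (x : ℤ → A) : (omegaSet f x).Nonempty := by
  obtain ⟨a, ha, hc⟩ := (isCompact_univ (X := ℤ → A)).exists_mapClusterPt_of_frequently
    (l := atTop) (f := fun t => f^[t] x)
    (Eventually.frequently (Eventually.of_forall fun _ => mem_univ _))
  exact ⟨a, hc⟩

theorem omega_sub_closed {x : ℤ → A} {C : Set (ℤ → A)} (hC : IsClosed C)
    (h : ∀ᶠ t in atTop, f^[t] x ∈ C) : omegaSet f x ⊆ C := by
  intro y hy
  by_contra hyC
  have := (MapClusterPt.frequently hy (hC.isOpen_compl.mem_nhds hyC)).and_eventually h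
  obtain ⟨t, h1, h2⟩ := this.exists
  exact h1 h2

theorem gls_closed : IsClosed (genLimitSet f) := isClosed_sInter fun _ h => h.1

theorem gls_residual : realm f (genLimitSet f) ∈ residual (ℤ → A) := by
  let S : Set (Set (ℤ → A)) := {U | IsOpen U ∧ realm f Uᶜ ∈ residual (ℤ → A)}
  obtain ⟨T, hTc, hTS, hT⟩ := TopologicalSpace.isOpen_sUnion_countable S fun s hs => hs.1
  have : (⋂ U ∈ T, realm f Uᶜ) ∈ residual (ℤ → A) :=
    (countable_bInter_mem hTc).2 fun U hU => (hTS hU).2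
  refine mem_of_superset this fun x hx y hy C hC => ?_
  by_contra hyC
  have : y ∈ ⋃₀ S := ⟨Cᶜ, ⟨hC.1.isOpen_compl, by simpa using hC.2⟩, hyC⟩
  rw [← hT] at this
  obtain ⟨U, hU, hyU⟩ := this
  exact (mem_iInter₂.1 hx U hU) hy hyU

theorem gls_sub {C : Set (ℤ → A)} (hC : IsClosed C)
    (h : realm f C ∈ residual (ℤ → A)) : genLimitSet f ⊆ C :=
  sInter_subset_of_mem ⟨hC, h⟩

theorem residual_shE (n : ℤ) {D : Set (ℤ → A)} (hD : D ∈ residual (ℤ → A)) :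
    shE n ⁻¹' D ∈ residual (ℤ → A) := by
  rw [← (shH (A := A) n).residual_map_eq] at hD
  exact hD

theorem gls_shE (hf : IsCA f) (n : ℤ) {x : ℤ → A} (hx : x ∈ genLimitSet f) :
    shE n x ∈ genLimitSet f := by
  have hc : IsClosed (shE n ⁻¹' genLimitSet f) := gls_closed.preimage (shH (A := A) n).continuous
  refine gls_sub hc ?_ hx
  refine mem_of_superset (residual_shE n (gls_residual (f := f))) fun y hy z hz => ?_
  exact hy (omega_shE hf n hz)

theorem gls_inv (hf : IsCA f) : Inv (genLimitSet f) := by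
  intro x
  constructor
  · intro h
    have := gls_shE hf (-1) h
    rw [← shE_one, ← shE_add] at this
    simpa [shE_zero] using this
  · intro h; exact gls_shE hf 1 h

theorem gls_f (hf : IsCA f) {x : ℤ → A} (hx : x ∈ genLimitSet f) : f x ∈ genLimitSet f := by
  refine gls_sub (C := f ⁻¹' genLimitSet f) (gls_closed.preimage hf.1) ?_ hx
  exact mem_of_superset (gls_residual (f := f)) fun y hy z hz => hy (omega_f hf hz)

theorem gls_f_surj (hf : IsCA f) : genLimitSet f ⊆ f '' genLimitSet f := by
  have hc : IsClosed (f '' genLimitSet f) := (gls_closed.isCompact.image hf.1).isClosed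
  refine gls_sub hc (mem_of_superset (gls_residual (f := f)) fun y hy z hz => ?_)
  by_contra hzn
  obtain ⟨C, hC, h1, h2⟩ := exists_clopen_of_closed_subset_open hc
    (isOpen_compl_singleton (x := z)) (by rintro a ha rfl; exact hzn ha)
  have hev : ∀ᶠ t in atTop, f^[t] y ∈ f ⁻¹' C :=
    ev_of_omega (hC.isOpen.preimage hf.1) fun a ha => h1 ⟨a, hy ha, rfl⟩
  have hev' : ∀ᶠ t in atTop, f^[t] y ∈ C := by
    obtain ⟨T, hT⟩ := eventually_atTop.1 hev
    refine eventually_atTop.2 ⟨T + 1, fun t ht => ?_⟩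
    obtain ⟨s, rfl⟩ : ∃ s, t = s + 1 := ⟨t - 1, by omega⟩
    rw [iterate_succ_apply']
    exact hT s (by omega)
  exact h2 (omega_sub_closed hC.isClosed hev' hz) rfl

theorem gls_nonempty [Nonempty A] : (genLimitSet f).Nonempty := by
  obtain ⟨x, hx⟩ := (dense_of_mem_residual (gls_residual (f := f))).nonempty
  obtain ⟨y, hy⟩ := omega_nonempty (f := f) x
  exact ⟨y, hx hy⟩

theorem trans_shift {O O' : Set (ℤ → A)} (hO : IsOpen O) (hO' : IsOpen O')
    (hne : O.Nonempty) (hne' : O'.Nonempty) : ∃ n : ℤ, (O ∩ shE n ⁻¹' O').Nonempty := by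
  obtain ⟨x, hx⟩ := hne
  obtain ⟨y, hy⟩ := hne'
  obtain ⟨n, hn⟩ := window (isCompact_singleton (x := x)) hO (by simpa using hx)
  obtain ⟨m, hm⟩ := window (isCompact_singleton (x := y)) hO' (by simpa using hy)
  refine ⟨n + m, fun i => if i < n then x i else y (i - (n + m)), ?_, ?_⟩
  · refine hn x rfl _ fun i _ h2 => ?_
    simp [h2]
  · refine hm y rfl _ fun i h1 h2 => ?_
    rw [shE_apply, if_neg (by omega)]
    congr 1; ring

theorem dyn (hf : IsCA f) {P Q : Set (ℤ → A)} (hP : IsClosed P) (hQ : IsClosed Q)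
    (hPI : Inv P) (hPQ : Disjoint P Q) (hfP : ∀ x ∈ P, f x ∈ P) (hfQ : ∀ x ∈ Q, f x ∈ Q)
    (hun : genLimitSet f = P ∪ Q) : P = ∅ ∨ Q = ∅ := by
  classical
  obtain ⟨U, hU, hPU, hUQ⟩ := exists_clopen_of_closed_subset_open hP hQ.isOpen_compl
    hPQ.subset_compl_right
  let C : Set (ℤ → A) → ℕ → Set (ℤ → A) := fun U T => {x | ∀ t, T ≤ t → f^[t] x ∈ U}
  have hCc : ∀ U : Set (ℤ → A), IsClosed U → ∀ T, IsClosed (C U T) := by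
    intro U hU T
    have : C U T = ⋂ t, ⋂ (_ : T ≤ t), f^[t] ⁻¹' U := by ext x; simp [C]
    rw [this]
    exact isClosed_iInter fun t => isClosed_iInter fun _ => hU.preimage (hf.1.iterate t)
  have hD : ∀ x ∈ realm f (genLimitSet f), (∃ T, x ∈ C U T) ∨ (∃ T, x ∈ C Uᶜ T) := by
    intro x hx
    let U1 := U ∩ f ⁻¹' U
    let V1 := Uᶜ ∩ f ⁻¹' Uᶜ
    have ho : IsOpen (U1 ∪ V1) :=
      (hU.isOpen.inter (hU.isOpen.preimage hf.1)).union
        (hU.compl.isOpen.inter (hU.compl.isOpen.preimage hf.1))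
    have hsub : omegaSet f x ⊆ U1 ∪ V1 := by
      intro y hy
      have := hx hy
      rw [hun] at this
      rcases this with h | h
      · exact Or.inl ⟨hPU h, hPU (hfP y h)⟩
      · exact Or.inr ⟨fun h' => hUQ h' h, fun h' => hUQ h' (hfQ y h)⟩
    obtain ⟨T, hT⟩ := eventually_atTop.1 (ev_of_omega ho hsub)
    have step : ∀ t, T ≤ t → (f^[t] x ∈ U ↔ f^[t+1] x ∈ U) := by
      intro t ht
      rw [iterate_succ_apply']
      rcases hT t ht with h | h
      · exact ⟨fun _ => h.2, fun _ => h.1⟩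
      · exact ⟨fun h' => absurd h' h.1, fun h' => absurd h' h.2⟩
    have all : ∀ t, T ≤ t → (f^[T] x ∈ U ↔ f^[t] x ∈ U) := by
      intro t ht
      induction t, ht using Nat.le_induction with
      | base => exact Iff.rfl
      | succ t ht ih => exact ih.trans (step t ht)
    by_cases h : f^[T] x ∈ U
    · exact Or.inl ⟨T, fun t ht => (all t ht).1 h⟩
    · exact Or.inr ⟨T, fun t ht => fun h' => h ((all t ht).2 h')⟩
  have hCP : ∀ x ∈ realm f (genLimitSet f), ∀ T, x ∈ C U T → omegaSet f x ⊆ P := by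
    intro x hx T hT y hy
    have h1 := hx hy
    rw [hun] at h1
    have h2 := omega_sub_closed hU.isClosed (eventually_atTop.2 ⟨T, hT⟩) hy
    exact h1.resolve_right (hUQ h2)
  have hCQ : ∀ x ∈ realm f (genLimitSet f), ∀ T, x ∈ C Uᶜ T → omegaSet f x ⊆ Q := by
    intro x hx T hT y hy
    have h1 := hx hy
    rw [hun] at h1
    have h2 := omega_sub_closed hU.compl.isClosed (eventually_atTop.2 ⟨T, hT⟩) hy
    exact h1.resolve_left fun h => h2 (hPU h)
  have mea : ∀ U : Set (ℤ → A), IsClosed U → (∀ T, interior (C U T) = ∅) →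
      (⋃ T, C U T)ᶜ ∈ residual (ℤ → A) := by
    intro U hU h
    exact isMeagre_iUnion fun T =>
      ((hCc U hU T).isNowhereDense_iff.2 (h T)).isMeagre
  by_cases h1 : ∀ T, interior (C U T) = ∅
  · left
    have : genLimitSet f ⊆ Q := by
      refine gls_sub hQ (mem_of_superset (inter_mem (gls_residual (f := f)) (mea U hU.isClosed h1)) ?_)
      rintro x ⟨hx, hx'⟩
      rcases hD x hx with ⟨T, hT⟩ | ⟨T, hT⟩
      · exact absurd (mem_iUnion.2 ⟨T, hT⟩) hx'
      · exact hCQ x hx T hT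
    rw [eq_empty_iff_forall_notMem]
    intro x hx
    exact hPQ.le_bot ⟨hx, this (hun ▸ Or.inl hx)⟩
  by_cases h2 : ∀ T, interior (C Uᶜ T) = ∅
  · right
    have : genLimitSet f ⊆ P := by
      refine gls_sub hP (mem_of_superset
        (inter_mem (gls_residual (f := f)) (mea _ hU.compl.isClosed h2)) ?_)
      rintro x ⟨hx, hx'⟩
      rcases hD x hx with ⟨T, hT⟩ | ⟨T, hT⟩
      · exact hCP x hx T hT
      · exact absurd (mem_iUnion.2 ⟨T, hT⟩) hx'
    rw [eq_empty_iff_forall_notMem]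
    intro x hx
    exact hPQ.le_bot ⟨this (hun ▸ Or.inr hx), hx⟩
  exfalso
  push Not at h1 h2
  obtain ⟨T, hT⟩ := h1
  obtain ⟨T', hT'⟩ := h2
  obtain ⟨n, hn⟩ := trans_shift isOpen_interior isOpen_interior hT hT'
  have hd := dense_of_mem_residual
    (inter_mem (gls_residual (f := f)) (residual_shE n (gls_residual (f := f))))
  obtain ⟨y, ⟨hy1, hy2⟩, hy3, hy4⟩ := hd.inter_open_nonempty _
    (isOpen_interior.inter (isOpen_interior.preimage (shH (A := A) n).continuous)) hn
  obtain ⟨z, hz⟩ := omega_nonempty (f := f) y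
  have hzP := hCP y hy3 T (interior_subset hy1) hz
  have hzQ := hCQ _ hy4 T' (interior_subset hy2) (omega_shE hf n hz)
  exact hPQ.le_bot ⟨(hPI.shE n z).2 hzP, hzQ⟩

theorem pre_image (hf : IsCA f) {X : Set (ℤ → A)} (h : Pre X) : Pre (f '' X) := by
  have hc : @Continuous _ _ (orbT A) (orbT A) f := by
    refine @Continuous.mk _ _ (orbT A) (orbT A) f ?_
    refine fun U hU => ⟨hU.1.preimage hf.1, fun x => ?_⟩
    show f (shift x) ∈ U ↔ f x ∈ U
    rw [← shE_one, ca_shE hf]; exact hU.2 _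
  exact @IsPreconnected.image _ _ (orbT A) (orbT A) _ h f (@Continuous.continuousOn _ _ (orbT A) (orbT A) _ _ hc)

theorem comp_pre {X Y : Set (ℤ → A)} (h : IsChainComponent X Y) : Pre Y :=
  pre_of_chain h.1.1 (inv_iff.1 h.1.2) h.2.2.1

/-- connected component in the orbit topology -/
def cc (X : Set (ℤ → A)) (x : ℤ → A) : Set (ℤ → A) := @connectedComponentIn _ (orbT A) X x

theorem mem_cc {X : Set (ℤ → A)} {x : ℤ → A} (hx : x ∈ X) : x ∈ cc X x :=
  @mem_connectedComponentIn _ (orbT A) _ _ hx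

theorem sub_cc {X Z : Set (ℤ → A)} {x : ℤ → A} (hZ : Pre Z) (hx : x ∈ Z) (h : Z ⊆ X) :
    Z ⊆ cc X x :=
  @IsPreconnected.subset_connectedComponentIn _ (orbT A) _ _ _ hZ hx h

theorem cc_comp {X : Set (ℤ → A)} (hX : IsClosed X) (hI : Inv X) {x : ℤ → A} (hx : x ∈ X) :
    IsChainComponent X (cc X x) := by
  have hpre : Pre (cc X x) := @isPreconnected_connectedComponentIn _ (orbT A) _ _
  have hsub : cc X x ⊆ X := @connectedComponentIn_subset _ (orbT A) X x
  have hcl : @IsClosed _ (orbT A) (cc X x) := by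
    refine @isClosed_of_closure_subset _ (orbT A) _ ?_
    refine sub_cc (Z := @closure _ (orbT A) (cc X x))
      (@IsPreconnected.closure _ (orbT A) _ hpre) (@subset_closure _ (orbT A) _ _ (mem_cc hx)) ?_
    exact @closure_minimal _ (orbT A) _ _ hsub (orb_isClosed.2 ⟨hX, hI⟩)
  have h' := orb_isClosed.1 hcl
  refine ⟨isSubshift_iff.2 hcl, hsub, chain_of_pre h'.1 h'.2 hpre, ?_⟩
  intro Z hZ hZX hZc hle
  refine Subset.antisymm ?_ hle
  exact sub_cc (pre_of_chain hZ.1 (inv_iff.1 hZ.2) hZc) (hle (mem_cc hx)) hZX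

theorem comp_eq_cc {X Y : Set (ℤ → A)} (hX : IsClosed X) (hI : Inv X)
    (h : IsChainComponent X Y) {x : ℤ → A} (hx : x ∈ Y) : Y = cc X x := by
  have h1 := cc_comp hX hI (h.2.1 hx)
  exact (h.2.2.2 _ h1.1 h1.2.1 h1.2.2.1 (sub_cc (comp_pre h) hx h.2.1)).symm

end Helpers

/-- if `ω̃(f)` has exactly `k` `σ±`-chain components `X_1, …, X_k`, then
there is a cyclic permutation `ρ` of `{1, …, k}` (a permutation with a single orbit) such
that `f(X_i) = X_{ρ(i)}` for each `i`. -/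
theorem stmt15 [Fintype A] [Nonempty A] [TopologicalSpace A] [DiscreteTopology A]
    (f : (ℤ → A) → (ℤ → A)) (hf : IsCA f) (k : ℕ) (Xs : Fin k → Set (ℤ → A))
    (hcomp : ∀ i, IsChainComponent (genLimitSet f) (Xs i))
    (hinj : Function.Injective Xs)
    (hall : ∀ Y : Set (ℤ → A), IsChainComponent (genLimitSet f) Y → ∃ i, Y = Xs i) :
    ∃ ρ : Equiv.Perm (Fin k), (∀ i j : Fin k, ∃ m : ℕ, (ρ ^ m) i = j) ∧
      ∀ i, f '' Xs i = Xs (ρ i) := by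
  have hX := gls_closed (f := f)
  have hI := gls_inv hf
  have hne : ∀ i, (Xs i).Nonempty := by
    intro i
    by_contra he
    rw [not_nonempty_iff_eq_empty] at he
    obtain ⟨x, hx⟩ := gls_nonempty (f := f)
    have h1 := cc_comp hX hI hx
    have h2 := (hcomp i).2.2.2 _ h1.1 h1.2.1 h1.2.2.1 (by simp [he])
    have h3 := mem_cc hx
    rw [h2, he] at h3
    exact h3
  have hcover : ∀ x ∈ genLimitSet f, ∃ i, x ∈ Xs i := by
    intro x hx
    obtain ⟨i, hi⟩ := hall _ (cc_comp hX hI hx)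
    exact ⟨i, hi ▸ mem_cc hx⟩
  have hdis : ∀ i j x, x ∈ Xs i → x ∈ Xs j → i = j := by
    intro i j x h1 h2
    exact hinj ((comp_eq_cc hX hI (hcomp i) h1).trans (comp_eq_cc hX hI (hcomp j) h2).symm)
  have hmap : ∀ i, ∃ j, f '' Xs i ⊆ Xs j := by
    intro i
    obtain ⟨x, hx⟩ := hne i
    have hfx := gls_f hf ((hcomp i).2.1 hx)
    obtain ⟨j, hj⟩ := hall _ (cc_comp hX hI hfx)
    refine ⟨j, hj ▸ ?_⟩
    refine sub_cc (pre_image hf (comp_pre (hcomp i))) ⟨x, hx, rfl⟩ ?_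
    rintro _ ⟨y, hy, rfl⟩
    exact gls_f hf ((hcomp i).2.1 hy)
  choose r hr using hmap
  have hsurj : Function.Surjective r := by
    intro j
    obtain ⟨y, hy⟩ := hne j
    obtain ⟨x, hx, rfl⟩ := gls_f_surj hf ((hcomp j).2.1 hy)
    obtain ⟨i, hi⟩ := hcover x hx
    exact ⟨i, hdis _ _ _ (hr i ⟨x, hi, rfl⟩) hy⟩
  have hbij : Function.Bijective r := ⟨Finite.injective_iff_surjective.2 hsurj, hsurj⟩
  let ρ : Equiv.Perm (Fin k) := Equiv.ofBijective r hbij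
  have hρ : ∀ i, ρ i = r i := fun i => rfl
  refine ⟨ρ, ?_, ?_⟩
  · intro i j
    have hu : ∀ S : Set (Fin k), IsClosed (⋃ l ∈ S, Xs l) := fun S =>
      (Set.toFinite S).isClosed_biUnion fun l _ => (hcomp l).1.1
    let O : Set (Fin k) := {l | ρ.SameCycle i l}
    have hcases := dyn hf (P := ⋃ l ∈ O, Xs l) (Q := ⋃ l ∈ Oᶜ, Xs l) (hu _) (hu _)
      (by
        intro x
        simp only [mem_iUnion]
        exact exists_congr fun l => exists_congr fun _ => inv_iff.1 (hcomp l).1.2 x)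
      (by
        rw [Set.disjoint_left]
        intro x h1 h2
        simp only [mem_iUnion] at h1 h2
        obtain ⟨a, ha, hxa⟩ := h1
        obtain ⟨b, hb, hxb⟩ := h2
        have := hdis a b x hxa hxb
        subst this
        exact hb ha)
      (by
        intro x h1
        simp only [mem_iUnion] at h1 ⊢
        obtain ⟨a, ha, hxa⟩ := h1
        exact ⟨ρ a, Equiv.Perm.sameCycle_apply_right.2 ha, hr a ⟨x, hxa, rfl⟩⟩)
      (by
        intro x h1
        simp only [mem_iUnion] at h1 ⊢
        obtain ⟨a, ha, hxa⟩ := h1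
        exact ⟨ρ a, fun h => ha (Equiv.Perm.sameCycle_apply_right.1 h), hr a ⟨x, hxa, rfl⟩⟩)
      (by
        apply Subset.antisymm
        · intro x hx
          obtain ⟨a, ha⟩ := hcover x hx
          by_cases h : a ∈ O
          · exact Or.inl (mem_biUnion h ha)
          · exact Or.inr (mem_biUnion (show a ∈ Oᶜ from h) ha)
        · exact union_subset (iUnion₂_subset fun a _ => (hcomp a).2.1)
            (iUnion₂_subset fun a _ => (hcomp a).2.1))
    rcases hcases with h | h
    · exfalso
      obtain ⟨x, hx⟩ := hne i
      have : x ∈ ⋃ l ∈ O, Xs l := mem_biUnion (Equiv.Perm.SameCycle.refl ρ i) hx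
      rw [h] at this
      exact this
    · by_cases hj : j ∈ O
      · exact Equiv.Perm.SameCycle.exists_nat_pow_eq hj
      · exfalso
        obtain ⟨x, hx⟩ := hne j
        have : x ∈ ⋃ l ∈ Oᶜ, Xs l := mem_biUnion (show j ∈ Oᶜ from hj) hx
        rw [h] at this
        exact this
  · intro i
    refine Subset.antisymm (hr i) ?_
    intro y hy
    obtain ⟨x, hx, rfl⟩ := gls_f_surj hf ((hcomp _).2.1 hy)
    obtain ⟨i', hi⟩ := hcover x hx
    have : r i' = r i := hdis _ _ _ (hr i' ⟨x, hi, rfl⟩) hy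
    have := hbij.1 this
    subst this
    exact ⟨x, hi, rfl⟩

end Gls
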